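/- Let Q ∈ ℝ^{n×n} be symmetric positive definite with smallest eigenvalue λ₁ > 0, F ∈ ℂ^{m×m} invertible, and Yᵢ ∈ ℂ^{m×m} with max_i ‖F⁻¹Yᵢ‖ < λ₁. Then the matrix I + (Q ⊗ F)⁻¹ diag(Y₁,…,Yₙ) is invertible. -/

import Mathlib

open Matrix Kronecker

/-- Operator norm of a matrix induced by the Euclidean (ℓ²) norms,
i.e. the largest singular value. -/
noncomputable def opNorm {𝕜 : Type*} [RCLike 𝕜] {k n : Type*} [Fintype k] [Fintype n]
    [DecidableEq n] (M : Matrix k n 𝕜) : ℝ :=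
  ‖LinearMap.toContinuousLinearMap (Matrix.toEuclideanLin M)‖

open scoped MatrixOrder in
open scoped Matrix.Norms.L2Operator in
lemma aux_psd {n : Type*} [Fintype n] [DecidableEq n] (Q : Matrix n n ℝ) (hQ : Q.IsHermitian)
    (l : ℝ) (hlb : ∀ i, l ≤ hQ.eigenvalues i) :
    ∃ B : Matrix n n ℝ, Q - l • 1 = Bᴴ * B := by
  have h : algebraMap ℝ (Matrix n n ℝ) l ≤ Q := by
    apply algebraMap_le_of_le_spectrum (ha := hQ.isSelfAdjoint)
    intro x hx
    rw [hQ.spectrum_real_eq_range_eigenvalues] at hx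
    obtain ⟨i, rfl⟩ := hx
    exact hlb i
  have h2 := sub_nonneg.mpr h
  obtain ⟨B, hB⟩ := CStarAlgebra.nonneg_iff_eq_star_mul_self.mp h2
  refine ⟨B, ?_⟩
  rw [← star_eq_conjTranspose, ← hB, Algebra.algebraMap_eq_smul_one]

open scoped ComplexOrder in
lemma aux_psd2 {n m : Type*} [Fintype n] [DecidableEq n] [Fintype m] [DecidableEq m]
    (Q : Matrix n n ℝ) (hQ : Q.IsHermitian)
    (l : ℝ) (hlb : ∀ i, l ≤ hQ.eigenvalues i) :
    ((Q.map (fun x : ℝ => (x : ℂ))) ⊗ₖ (1 : Matrix m m ℂ) - (l : ℂ) • 1).PosSemidef := by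
  obtain ⟨B, hB⟩ := aux_psd Q hQ l hlb
  have h1 : Q.map (fun x : ℝ => (x : ℂ)) - (l : ℂ) • 1
      = (B.map (fun x : ℝ => (x : ℂ)))ᴴ * B.map (fun x : ℝ => (x : ℂ)) := by
    ext i j
    have := congrArg (fun x : ℝ => (x : ℂ)) (congrFun (congrFun hB i) j)
    simpa [Matrix.mul_apply, Matrix.one_apply, apply_ite] using this
  have h2 : (Q.map (fun x : ℝ => (x : ℂ)) - (l : ℂ) • 1).PosSemidef := by
    rw [h1]; exact posSemidef_conjTranspose_mul_self _
  have h3 := h2.kronecker (PosSemidef.one (n := m) (R := ℂ))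
  have h4 : (Q.map (fun x : ℝ => (x : ℂ))) ⊗ₖ (1 : Matrix m m ℂ) - (l : ℂ) • 1
      = (Q.map (fun x : ℝ => (x : ℂ)) - (l : ℂ) • 1) ⊗ₖ (1 : Matrix m m ℂ) := by
    rw [← one_kronecker_one, ← smul_kronecker]
    ext ⟨i, k⟩ ⟨j, l⟩
    simp only [Matrix.sub_apply, kroneckerMap_apply, sub_mul]
  rw [h4]
  exact h3

open scoped ComplexOrder in
lemma aux_psd3 {n m : Type*} [Fintype n] [DecidableEq n] [Fintype m] [DecidableEq m]
    (Q : Matrix n n ℝ) (hQ : Q.IsHermitian)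
    (l : ℝ) (hlb : ∀ i, l ≤ hQ.eigenvalues i) (v : n × m → ℂ) :
    0 ≤ RCLike.re (star v ⬝ᵥ
      (((Q.map (fun x : ℝ => (x : ℂ))) ⊗ₖ (1 : Matrix m m ℂ) - (l : ℂ) • 1) *ᵥ v)) :=
  (aux_psd2 (m := m) Q hQ l hlb).re_dotProduct_nonneg v

lemma aux_quad {m : Type*} [Fintype m] [DecidableEq m] (G : Matrix m m ℂ) (w : m → ℂ) :
    -(star w ⬝ᵥ (G *ᵥ w)).re ≤ opNorm G * ∑ k, ‖w k‖ ^ 2 := by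
  have h0 : star w ⬝ᵥ (G *ᵥ w) =
      inner ℂ (WithLp.toLp 2 w) (LinearMap.toContinuousLinearMap (Matrix.toEuclideanLin G) (WithLp.toLp 2 w)) := by
    simp [EuclideanSpace.inner_eq_star_dotProduct, dotProduct_comm]
  have h1 : ‖star w ⬝ᵥ (G *ᵥ w)‖ ≤ opNorm G * ∑ k, ‖w k‖ ^ 2 := by
    rw [h0]
    have hn : ∑ k, ‖w k‖ ^ 2 = ‖WithLp.toLp 2 w‖ ^ 2 := by
      rw [EuclideanSpace.norm_sq_eq]
    rw [hn]
    refine (norm_inner_le_norm _ _).trans ?_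
    have := (LinearMap.toContinuousLinearMap (Matrix.toEuclideanLin G)).le_opNorm (WithLp.toLp 2 w)
    unfold opNorm
    nlinarith [norm_nonneg (WithLp.toLp 2 w)]
  exact ((neg_le_abs _).trans (Complex.abs_re_le_norm _)).trans h1

/-- If max_i ‖F⁻¹Yᵢ‖ < λ₁, then I + (Q ⊗ F)⁻¹ diag(Y₁,…,Yₙ) is invertible. -/
theorem stmt_15 {n m : Type*} [Fintype n] [DecidableEq n] [Nonempty n]
    [Fintype m] [DecidableEq m] [Nonempty m]
    (Q : Matrix n n ℝ) (hQ : Q.IsHermitian) (hPD : Q.PosDef)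
    (lam1 : ℝ) (hlam_pos : 0 < lam1)
    (hmem : ∃ i, hQ.eigenvalues i = lam1)
    (hlb : ∀ i, lam1 ≤ hQ.eigenvalues i)
    (F : Matrix m m ℂ) (hF : IsUnit F.det)
    (Y : n → Matrix m m ℂ)
    (hY : ∀ i, opNorm (F⁻¹ * Y i) < lam1) :
    IsUnit (1 + ((Q.map (fun x : ℝ => (x : ℂ))) ⊗ₖ F)⁻¹ * Matrix.reindex (Equiv.prodComm m n) (Equiv.prodComm m n) (Matrix.blockDiagonal Y)) := by
  classical
  set Qc := Q.map (fun x : ℝ => (x : ℂ)) with hQc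
  set D := Matrix.reindex (Equiv.prodComm m n) (Equiv.prodComm m n) (Matrix.blockDiagonal Y) with hD
  have hQdet : IsUnit Qc.det := by
    have h1 : Qc.det = ((Q.det : ℝ) : ℂ) := (RingHom.map_det Complex.ofRealHom Q).symm
    rw [h1, isUnit_iff_ne_zero]
    exact_mod_cast hPD.det_pos.ne'
  have hA : IsUnit (Qc ⊗ₖ F).det := by
    rw [det_kronecker]
    exact (hQdet.pow _).mul (hF.pow _)
  rw [← mulVec_injective_iff_isUnit, ← coe_mulVecLin, injective_iff_map_eq_zero]
  intro v hv
  rw [mulVecLin_apply] at hv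
  have hv1 : (Qc ⊗ₖ F + D) *ᵥ v = 0 := by
    have := congrArg (fun x => (Qc ⊗ₖ F) *ᵥ x) hv
    simpa [mulVec_mulVec, mul_add, ← mul_assoc, mul_nonsing_inv _ hA] using this
  have hv2 : (Qc ⊗ₖ (1 : Matrix m m ℂ)) *ᵥ v = - (((1 : Matrix n n ℂ) ⊗ₖ F⁻¹) * D) *ᵥ v := by
    have := congrArg (fun x => ((1 : Matrix n n ℂ) ⊗ₖ F⁻¹) *ᵥ x) hv1
    simp only [mulVec_mulVec, mulVec_zero] at this
    rw [mul_add, ← mul_kronecker_mul, one_mul, nonsing_inv_mul _ hF, add_mulVec] at this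
    rw [neg_mulVec]
    exact eq_neg_of_add_eq_zero_left this
  have hblock : ∀ i k, ((((1 : Matrix n n ℂ) ⊗ₖ F⁻¹) * D) *ᵥ v) (i, k)
      = ((F⁻¹ * Y i) *ᵥ (fun k => v (i, k))) k := by
    intro i k
    rw [← mulVec_mulVec, ← mulVec_mulVec]
    simp [hD, mulVec, dotProduct, Fintype.sum_prod_type, blockDiagonal_apply, one_apply, ite_mul]
  have hpsd := aux_psd3 (m := m) Q hQ lam1 hlb v
  rw [← hQc, sub_mulVec, hv2, smul_mulVec, one_mulVec, dotProduct_sub, neg_mulVec,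
    dotProduct_neg, dotProduct_smul] at hpsd
  have e1 : star v ⬝ᵥ v = ((∑ i, ∑ k, ‖v (i, k)‖ ^ 2 : ℝ) : ℂ) := by
    simp [dotProduct, Fintype.sum_prod_type, ← Complex.conj_mul']
  have e2 : star v ⬝ᵥ ((((1 : Matrix n n ℂ) ⊗ₖ F⁻¹) * D) *ᵥ v)
      = ∑ i, star (fun k => v (i, k)) ⬝ᵥ ((F⁻¹ * Y i) *ᵥ (fun k => v (i, k))) := by
    simp only [dotProduct, Fintype.sum_prod_type, hblock, Pi.star_apply]
  rw [e1, e2, smul_eq_mul, ← Complex.ofReal_mul] at hpsd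
  simp only [RCLike.re_to_complex, Complex.sub_re, Complex.neg_re, Complex.ofReal_re,
    Complex.re_sum, Finset.mul_sum, ← Finset.sum_neg_distrib] at hpsd
  by_contra hne
  obtain ⟨⟨i0, k0⟩, h0⟩ := Function.ne_iff.mp hne
  have hlt : ∑ i, -(star (fun k => v (i, k)) ⬝ᵥ ((F⁻¹ * Y i) *ᵥ (fun k => v (i, k)))).re
      < ∑ i, lam1 * ∑ k, ‖v (i, k)‖ ^ 2 := by
    apply Finset.sum_lt_sum
    · intro i _
      refine (aux_quad _ _).trans ?_
      exact mul_le_mul_of_nonneg_right (hY i).le (Finset.sum_nonneg fun _ _ => sq_nonneg _)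
    · refine ⟨i0, Finset.mem_univ _, (aux_quad _ _).trans_lt ?_⟩
      refine mul_lt_mul_of_pos_right (hY i0) ?_
      exact Finset.sum_pos' (fun _ _ => sq_nonneg _)
        ⟨k0, Finset.mem_univ _, pow_pos (norm_pos_iff.mpr h0) 2⟩
  simp only [Finset.mul_sum] at hpsd hlt
  linarith
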